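/- Let (X,T) be an odometer system with partition data of sizes m_k, and write α_k = m_k/m_{k−1} (with m_0 = 1). Suppose that every prime number divides α_i for infinitely many i. Then the only minimal bounded speedup of (X,T) is T itself: if p : X → ℤ⁺ is a bounded function such that S(x) = T^{p(x)}(x) defines a minimal homeomorphism S : X → X, then p(x) = 1 for all x ∈ X. -/

import Mathlib

/-- A minimal Cantor-type dynamical system: every `T`-orbit (over `ℤ`) is dense. -/
def IsMinimalHomeo {X : Type*} [TopologicalSpace X] (T : Equiv.Perm X) : Prop :=
  ∀ x : X, Dense (Set.range fun n : ℤ => (T ^ n) x)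


/-- Odometer data for `(X,T)`: nested cyclic Kakutani–Rokhlin partitions
`P(k) = {T^i A(k) : 0 ≤ i < m k}` which refine each other and separate points. -/
def IsOdometerData {X : Type*} [TopologicalSpace X] (T : Equiv.Perm X)
    (m : ℕ → ℕ) (A : ℕ → Set X) : Prop :=
  (2 ≤ m 0) ∧ (∀ k, m k ∣ m (k + 1)) ∧ (∀ k, 2 * m k ≤ m (k + 1)) ∧
  (∀ k, (A k).Nonempty ∧ IsClopen (A k)) ∧
  (∀ k, ∀ i < m k, ∀ j < m k, i ≠ j →
    Disjoint ((⇑(T ^ i)) '' A k) ((⇑(T ^ j)) '' A k)) ∧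
  (∀ k, (⋃ i < m k, (⇑(T ^ i)) '' A k) = Set.univ) ∧
  (∀ k, (⇑(T ^ m k)) '' A k = A k) ∧
  (∀ k, ∀ i < m (k + 1), ∃ j < m k, (⇑(T ^ i)) '' A (k + 1) ⊆ (⇑(T ^ j)) '' A k) ∧
  (∀ x y : X, x ≠ y → ∃ k, ∀ i < m k,
    ¬(x ∈ (⇑(T ^ i)) '' A k ∧ y ∈ (⇑(T ^ i)) '' A k))

/-!
An odometer factors continuously onto the rotation of every `ZMod (m k)`. Being bounded and
continuous, the jump function `p` is the pullback of some `g : ZMod (m k) → ℕ`. Hence `S` descends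
to a permutation of `ZMod (m k)`, which minimality forces to be a single cycle; going once around
it gives `S ^ m k = T ^ D` with `D = ∑ c, g c` a multiple of `m k`. If `T` also factors onto the
rotation of `ZMod M`, then `S ^ m k` acts trivially on the induced factor of cardinality
`gcd D M`, so minimality gives `gcd D M ≤ m k`. But if a prime `q` divided `D / m k`, then
`q * m k` would divide `gcd D (m i)` for large `i`. So `D = m k`: the average of `g ≥ 1` is `1`.
-/

open Function

section Permutations

variable {X Y : Type*}

theorem semiconj_zpow {φ : X → Y} {S : Equiv.Perm X} {σ : Equiv.Perm Y} (h : Semiconj φ S σ) :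
    ∀ n : ℤ, Semiconj φ ⇑(S ^ n) ⇑(σ ^ n)
  | (n : ℕ) => by rw [zpow_natCast, zpow_natCast]; exact h.iterate_right n
  | .negSucc n => by
    rw [zpow_negSucc, zpow_negSucc]
    exact (h.iterate_right (n + 1)).inverses_right
      (S ^ (n + 1)).right_inv (σ ^ (n + 1)).left_inv

theorem birkhoffSum_card_of_isCycleOn {M : Type*} [AddCommMonoid M] {σ : Equiv.Perm X}
    {s : Finset X} (hσ : σ.IsCycleOn s) (g : X → M) {a : X} (ha : a ∈ s) :
    birkhoffSum σ g s.card a = ∑ x ∈ s, g x := by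
  refine Finset.sum_bij (fun n _ => (σ ^ n) a) (fun n _ => (hσ.1.perm_pow n).mapsTo ha)
    (fun i hi j hj hij => ?_) (fun b hb => ?_) (fun _ _ => rfl)
  · exact ((hσ.pow_apply_eq_pow_apply ha).1 hij).eq_of_lt_of_lt
      (Finset.mem_range.1 hi) (Finset.mem_range.1 hj)
  · obtain ⟨n, hn, hnb⟩ := hσ.exists_pow_eq ha hb
    exact ⟨n, Finset.mem_range.2 hn, hnb⟩

end Permutations

theorem exists_factorsThrough_of_separating {X Y ι : Type*} [TopologicalSpace X] [CompactSpace X]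
    [TopologicalSpace Y] [DiscreteTopology Y] [Preorder ι] [IsDirectedOrder ι] [Nonempty ι]
    {Z : ι → Type*} [∀ k, TopologicalSpace (Z k)] [∀ k, T2Space (Z k)] {φ : ∀ k, X → Z k}
    (hφ : ∀ k, Continuous (φ k)) (hmono : Antitone fun k => Setoid.ker (φ k))
    (hsep : ∀ x y, (∀ k, φ k x = φ k y) → x = y) {p : X → Y} (hp : Continuous p) :
    ∃ k, p.FactorsThrough (φ k) := by
  have hp_ne : IsClosed {z : X × X | p z.1 ≠ p z.2} :=
    (isClosed_discrete {w : Y × Y | w.1 ≠ w.2}).preimage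
      ((hp.comp continuous_fst).prodMk (hp.comp continuous_snd))
  obtain ⟨k, hk⟩ := hp_ne.isCompact.elim_directed_family_closed
    (fun k => {z : X × X | φ k z.1 = φ k z.2})
    (fun k => isClosed_eq ((hφ k).comp continuous_fst) ((hφ k).comp continuous_snd))
    (Set.eq_empty_of_forall_notMem fun z hz =>
      hz.1 (congrArg p (hsep z.1 z.2 (Set.mem_iInter.1 hz.2))))
    (directed_of_isDirected_le fun _ _ hkl _ hz => hmono hkl hz)
  exact ⟨k, fun x y hxy => of_not_not fun hne => Set.notMem_empty (x, y) (hk ▸ ⟨hne, hxy⟩)⟩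

namespace IsMinimalHomeo

variable {X Z : Type*} [TopologicalSpace X] [TopologicalSpace Z] [DiscreteTopology Z]
  {S : Equiv.Perm X} {φ : X → Z}

theorem surjective_zpow_apply (hS : IsMinimalHomeo S) (hφ : Continuous φ) (hsurj : Surjective φ)
    (x : X) : Surjective fun n : ℤ => φ ((S ^ n) x) := by
  intro c
  obtain ⟨_, ⟨n, rfl⟩, hn⟩ :=
    (hS x).exists_mem_open ((isOpen_discrete {c}).preimage hφ) (hsurj c)
  exact ⟨n, hn⟩

theorem card_le_of_pow_invariant [Nonempty X] (hS : IsMinimalHomeo S) (hφ : Continuous φ)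
    (hsurj : Surjective φ) {n : ℕ} (hn : 0 < n) (hinv : ∀ x, φ ((S ^ n) x) = φ x) :
    Nat.card Z ≤ n := by
  obtain ⟨x⟩ := ‹Nonempty X›
  have hper : Periodic (fun i : ℤ => φ ((S ^ i) x)) n := fun i => by
    beta_reduce
    rw [add_comm, zpow_add, Equiv.Perm.mul_apply, zpow_natCast, hinv]
  have hsurj_Ico : Surjective fun i : Finset.Ico (0 : ℤ) n => φ ((S ^ (i : ℤ)) x) := fun c => by
    obtain ⟨l, rfl⟩ := hS.surjective_zpow_apply hφ hsurj x c
    obtain ⟨i, hi, hli⟩ := hper.exists_mem_Ico₀ (Int.natCast_pos.2 hn) l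
    exact ⟨⟨i, Finset.mem_Ico.2 hi⟩, hli.symm⟩
  simpa [-Finset.mem_Ico] using Nat.card_le_card_of_surjective _ hsurj_Ico

theorem isCycleOn_univ {σ : Equiv.Perm Z} (hS : IsMinimalHomeo S) (hφ : Continuous φ)
    (hsurj : Surjective φ) (hσ : Semiconj φ S σ) : σ.IsCycleOn Set.univ := by
  refine ⟨Set.bijOn_univ.2 σ.bijective, fun a _ b _ => ?_⟩
  obtain ⟨x, rfl⟩ := hsurj a
  obtain ⟨n, rfl⟩ := hS.surjective_zpow_apply hφ hsurj x b
  exact ⟨n, (semiconj_zpow hσ n x).symm⟩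

end IsMinimalHomeo

/-- `S` is a speedup of `T` with jump function `p`. Positivity, boundedness and continuity of `p`
are imposed separately. -/
def IsSpeedup {X : Type*} (T S : Equiv.Perm X) (p : X → ℕ) : Prop :=
  ∀ x, S x = (T ^ p x) x

theorem IsSpeedup.pow_apply {X : Type*} {T S : Equiv.Perm X} {p : X → ℕ} (h : IsSpeedup T S p)
    (n : ℕ) (x : X) : (S ^ n) x = (T ^ birkhoffSum S p n x) x := by
  induction n with
  | zero => rfl
  | succ n ih =>
    rw [pow_succ', Equiv.Perm.mul_apply, h, birkhoffSum_succ, add_comm, pow_add,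
      Equiv.Perm.mul_apply, ← ih]
    rfl

/-- `φ` is a continuous factor map from `(X, T)` to the rotation `c ↦ c + 1` of `ZMod N`.
Surjectivity is not required, since it is automatic when `N ≠ 0` and `X` is nonempty. -/
structure IsCyclicFactor {X : Type*} [TopologicalSpace X] (T : Equiv.Perm X) {N : ℕ}
    (φ : X → ZMod N) : Prop where
  continuous : Continuous φ
  map_apply : ∀ x, φ (T x) = φ x + 1

namespace IsCyclicFactor

variable {X : Type*} [TopologicalSpace X] {T S : Equiv.Perm X} {N : ℕ} {φ : X → ZMod N}

theorem map_pow_apply (hφ : IsCyclicFactor T φ) (n : ℕ) (x : X) : φ ((T ^ n) x) = φ x + n := by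
  induction n with
  | zero => simp
  | succ n ih => rw [pow_succ', Equiv.Perm.mul_apply, hφ.map_apply, ih, Nat.cast_succ, add_assoc]

theorem surjective [NeZero N] [Nonempty X] (hφ : IsCyclicFactor T φ) : Surjective φ := by
  intro c
  obtain ⟨x⟩ := ‹Nonempty X›
  exact ⟨(T ^ (c - φ x).val) x, by
    rw [hφ.map_pow_apply, ZMod.natCast_zmod_val, add_sub_cancel]⟩

theorem castHom (hφ : IsCyclicFactor T φ) {n : ℕ} (hn : n ∣ N) :
    IsCyclicFactor T (ZMod.castHom hn (ZMod n) ∘ φ) where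
  continuous := continuous_of_discreteTopology.comp hφ.continuous
  map_apply x := by rw [comp_apply, comp_apply, hφ.map_apply, map_add, map_one]

theorem gcd_le_of_pow_eq [Nonempty X] (hφ : IsCyclicFactor T φ) (hS : IsMinimalHomeo S)
    {n D : ℕ} (hn : 0 < n) (hST : S ^ n = T ^ D) : D.gcd N ≤ n := by
  obtain hgcd | hgcd := eq_or_ne (D.gcd N) 0
  · exact hgcd ▸ n.zero_le
  have : NeZero (D.gcd N) := ⟨hgcd⟩
  have hψ := hφ.castHom (Nat.gcd_dvd_right D N)
  have hD : (D : ZMod (D.gcd N)) = 0 := (ZMod.natCast_eq_zero_iff _ _).2 (Nat.gcd_dvd_left D N)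
  have hinv := fun x => (hψ.map_pow_apply D x).trans (by rw [hD, add_zero])
  rw [← hST] at hinv
  simpa using hS.card_le_of_pow_invariant hψ.continuous hψ.surjective hn hinv

theorem continuous_jump (hφ : IsCyclicFactor T φ) {p : X → ℕ} (hp : IsSpeedup T S p)
    (hS : Continuous S) (hpN : ∀ x, p x < N) : Continuous p := by
  have hp_eq : p = fun x => (φ (S x) - φ x).val := funext fun x => by
    rw [hp, hφ.map_pow_apply, add_sub_cancel_left, ZMod.val_cast_of_lt (hpN x)]
  rw [hp_eq]
  exact continuous_of_discreteTopology.comp ((hφ.continuous.comp hS).sub hφ.continuous)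

section Speedup

variable [Nonempty X] [NeZero N] {g : ZMod N → ℕ}

theorem exists_isCycleOn_semiconj (hφ : IsCyclicFactor T φ) (hS : IsMinimalHomeo S)
    (hg : IsSpeedup T S (g ∘ φ)) :
    ∃ σ : Equiv.Perm (ZMod N), σ.IsCycleOn Set.univ ∧ Semiconj φ S σ := by
  have hsemi : Semiconj φ S fun c => c + g c := fun x => by
    rw [hg, hφ.map_pow_apply, comp_apply]
  have hsurj : Surjective fun c : ZMod N => c + g c :=
    .of_comp (hsemi.comp_eq ▸ hφ.surjective.comp S.surjective)
  let σ : Equiv.Perm (ZMod N) :=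
    .ofBijective _ ⟨Finite.injective_iff_surjective.2 hsurj, hsurj⟩
  exact ⟨σ, hS.isCycleOn_univ hφ.continuous hφ.surjective hsemi, hsemi⟩

theorem speedup_pow_eq (hφ : IsCyclicFactor T φ) (hS : IsMinimalHomeo S)
    (hg : IsSpeedup T S (g ∘ φ)) : S ^ N = T ^ ∑ c, g c := by
  obtain ⟨σ, hσ, hsemi⟩ := hφ.exists_isCycleOn_semiconj hS hg
  rw [← Finset.coe_univ] at hσ
  ext x
  have hsum : birkhoffSum S (g ∘ φ) N x = birkhoffSum σ g N (φ x) :=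
    Finset.sum_congr rfl fun i _ => congrArg g (hsemi.iterate_right i x)
  have hcycle := birkhoffSum_card_of_isCycleOn hσ g (Finset.mem_univ (φ x))
  rw [Finset.card_univ, ZMod.card] at hcycle
  rw [hg.pow_apply, hsum, hcycle]

theorem dvd_sum_of_speedup (hφ : IsCyclicFactor T φ) (hS : IsMinimalHomeo S)
    (hg : IsSpeedup T S (g ∘ φ)) : N ∣ ∑ c, g c := by
  obtain ⟨σ, hσ, hsemi⟩ := hφ.exists_isCycleOn_semiconj hS hg
  rw [← Finset.coe_univ] at hσ
  obtain ⟨x⟩ := ‹Nonempty X›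
  have hcycle := hσ.pow_card_apply (Finset.mem_univ (φ x))
  have hreturn : φ x + (∑ c, g c : ℕ) = φ x := calc
    _ = φ ((S ^ N) x) := by rw [hφ.speedup_pow_eq hS hg, hφ.map_pow_apply]
    _ = (σ ^ N) (φ x) := hsemi.iterate_right N x
    _ = φ x := by rwa [Finset.card_univ, ZMod.card] at hcycle
  exact (ZMod.natCast_eq_zero_iff _ _).1 (add_eq_left.1 hreturn)

end Speedup

end IsCyclicFactor

namespace IsOdometerData

variable {X : Type*} [TopologicalSpace X] {T : Equiv.Perm X} {m : ℕ → ℕ} {A : ℕ → Set X}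

theorem lt_size (h : IsOdometerData T m A) (k : ℕ) : k < m k := by
  obtain ⟨h_two_le, -, h_double, -⟩ := h
  induction k with
  | zero => exact two_pos.trans_le h_two_le
  | succ k ih => have := h_double k; omega

theorem size_pos (h : IsOdometerData T m A) (k : ℕ) : 0 < m k :=
  k.zero_le.trans_lt (h.lt_size k)

theorem image_pow_mod (h : IsOdometerData T m A) (k i : ℕ) :
    ⇑(T ^ (i % m k)) '' A k = ⇑(T ^ i) '' A k := by
  obtain ⟨-, -, -, -, -, -, h_return, -⟩ := h
  have hper : IsPeriodicPt (Set.image T) (m k) (A k) := by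
    rw [IsPeriodicPt, IsFixedPt, ← Set.image_iterate_eq]
    exact h_return k
  rw [Equiv.Perm.coe_pow, Equiv.Perm.coe_pow, Set.image_iterate_eq, Set.image_iterate_eq]
  exact hper.iterate_mod_apply i

theorem exists_address (h : IsOdometerData T m A) (k : ℕ) (x : X) :
    ∃ c : ZMod (m k), ∀ i : ℕ, x ∈ ⇑(T ^ i) '' A k ↔ c = i := by
  obtain ⟨-, -, -, -, h_disj, h_cover, -⟩ := id h
  obtain ⟨a, ha, hxa⟩ : ∃ a < m k, x ∈ ⇑(T ^ a) '' A k := by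
    simpa only [Set.mem_iUnion, exists_prop] using (h_cover k).ge (Set.mem_univ x)
  refine ⟨a, fun i => ?_⟩
  rw [← h.image_pow_mod, ZMod.natCast_eq_natCast_iff', Nat.mod_eq_of_lt ha]
  refine ⟨fun hxi => ?_, fun hai => hai ▸ hxa⟩
  by_contra hne
  exact Set.disjoint_left.1 (h_disj k a ha _ (Nat.mod_lt i (h.size_pos k)) hne) hxa hxi

/-- The index, modulo `m k`, of the level `T^i A(k)` of the `k`-th tower that contains `x`. -/
noncomputable def address (h : IsOdometerData T m A) (k : ℕ) (x : X) : ZMod (m k) :=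
  (h.exists_address k x).choose

theorem mem_image_pow_iff (h : IsOdometerData T m A) {k i : ℕ} {x : X} :
    x ∈ ⇑(T ^ i) '' A k ↔ h.address k x = i :=
  (h.exists_address k x).choose_spec i

theorem exists_lt_address_eq (h : IsOdometerData T m A) (k : ℕ) (x : X) :
    ∃ i < m k, h.address k x = i := by
  have : NeZero (m k) := ⟨(h.size_pos k).ne'⟩
  exact ⟨(h.address k x).val, ZMod.val_lt _, (ZMod.natCast_zmod_val _).symm⟩

theorem isCyclicFactor_address (h : IsOdometerData T m A) (hT : Continuous T.symm) (k : ℕ) :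
    IsCyclicFactor T (h.address k) where
  continuous := continuous_discrete_rng.2 fun c => by
    have : NeZero (m k) := ⟨(h.size_pos k).ne'⟩
    obtain ⟨-, -, -, hA, -⟩ := id h
    have hfiber : h.address k ⁻¹' {c} = ⇑(T ^ c.val) '' A k := Set.ext fun x => by
      rw [h.mem_image_pow_iff, ZMod.natCast_zmod_val, Set.mem_preimage, Set.mem_singleton_iff]
    rw [hfiber, Equiv.Perm.coe_pow, Set.image_iterate_eq]
    exact Iterate.rec IsOpen (hA k).2.isOpen (T.continuous_symm_iff.1 hT) _
  map_apply x := by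
    obtain ⟨i, -, hi⟩ := h.exists_lt_address_eq k x
    rw [hi, ← Nat.cast_succ, ← h.mem_image_pow_iff, pow_succ', Equiv.Perm.coe_mul, Set.image_comp]
    exact Set.mem_image_of_mem T (h.mem_image_pow_iff.2 hi)

theorem antitone_ker_address (h : IsOdometerData T m A) :
    Antitone fun k => Setoid.ker (h.address k) := by
  obtain ⟨-, -, -, -, -, -, -, h_refine, -⟩ := id h
  refine antitone_nat_of_succ_le fun k x y hxy => ?_
  obtain ⟨i, hi, hxi⟩ := h.exists_lt_address_eq (k + 1) x
  obtain ⟨j, -, hij⟩ := h_refine k i hi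
  have hxj := h.mem_image_pow_iff.1 (hij (h.mem_image_pow_iff.2 hxi))
  have hyj := h.mem_image_pow_iff.1 (hij (h.mem_image_pow_iff.2 (hxy.symm.trans hxi)))
  exact hxj.trans hyj.symm

theorem eq_of_address_eq (h : IsOdometerData T m A) {x y : X}
    (hxy : ∀ k, h.address k x = h.address k y) : x = y := by
  obtain ⟨-, -, -, -, -, -, -, -, h_sep⟩ := id h
  by_contra hne
  obtain ⟨k, hk⟩ := h_sep x y hne
  obtain ⟨i, hi, hxi⟩ := h.exists_lt_address_eq k x
  exact hk i hi ⟨h.mem_image_pow_iff.2 hxi, h.mem_image_pow_iff.2 ((hxy k).symm.trans hxi)⟩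

theorem exists_jump_eq_comp_address [CompactSpace X] (h : IsOdometerData T m A)
    (hT : Continuous T.symm) {S : Equiv.Perm X} (hS : Continuous S) {p : X → ℕ}
    (hp : IsSpeedup T S p) {M : ℕ} (hpM : ∀ x, p x ≤ M) :
    ∃ k, ∃ g : ZMod (m k) → ℕ, p = g ∘ h.address k := by
  have hpc : Continuous p := (h.isCyclicFactor_address hT M).continuous_jump hp hS fun x =>
    (hpM x).trans_lt (h.lt_size M)
  obtain ⟨k, hk⟩ := exists_factorsThrough_of_separating
    (fun k => (h.isCyclicFactor_address hT k).continuous) h.antitone_ker_address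
    (fun _ _ => h.eq_of_address_eq) hpc
  exact ⟨k, (factorsThrough_iff p).1 hk⟩

end IsOdometerData

section Arithmetic

variable {m : ℕ → ℕ}

theorem exists_mul_dvd_of_dvd_div_succ (hm : ∀ k, m k ∣ m (k + 1)) {q : ℕ}
    (hq : ∀ N, ∃ i, N ≤ i ∧ q ∣ m (i + 1) / m i) (k : ℕ) : ∃ i, q * m k ∣ m i := by
  obtain ⟨i, hki, hqi⟩ := hq k
  have hki_dvd : m k ∣ m i := Nat.le_induction dvd_rfl (fun j _ h => h.trans (hm j)) i hki
  exact ⟨i + 1, Nat.div_mul_cancel (hm i) ▸ mul_dvd_mul hqi hki_dvd⟩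

theorem eq_of_dvd_of_gcd_le {n D : ℕ} (hn : 0 < n) (hm : ∀ i, 0 < m i)
    (hprime : ∀ q : ℕ, q.Prime → ∃ i, q * n ∣ m i) (hD : n ∣ D)
    (hgcd : ∀ i, D.gcd (m i) ≤ n) : D = n := by
  obtain ⟨d, rfl⟩ := hD
  suffices hd : d = 1 by rw [hd, mul_one]
  by_contra hne
  obtain ⟨q, hq, hqd⟩ := Nat.exists_prime_and_dvd hne
  obtain ⟨i, hi⟩ := hprime q hq
  have hle : q * n ≤ n := calc
    q * n ≤ (n * d).gcd (m i) := Nat.le_of_dvd (Nat.gcd_pos_of_pos_right _ (hm i))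
      (Nat.dvd_gcd (mul_comm q n ▸ mul_dvd_mul_left n hqd) hi)
    _ ≤ n := hgcd i
  exact hle.not_gt (lt_mul_of_one_lt_left hn hq.one_lt)

theorem eq_one_of_sum_eq_card {ι : Type*} [Fintype ι] {g : ι → ℕ} (hg : ∀ c, 1 ≤ g c)
    (hsum : ∑ c, g c = Fintype.card ι) (c : ι) : g c = 1 :=
  ((Finset.sum_eq_sum_iff_of_le fun c _ => hg c).1
    (by rw [hsum, Fintype.card_eq_sum_ones]) c (Finset.mem_univ c)).symm

end Arithmetic

/-- If `(X,T)` is an odometer with partition sizes `m k` such that every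
prime divides `α_i = m (i+1) / m i` for infinitely many `i`, then the only minimal bounded
speedup of `(X,T)` is `T` itself: any bounded jump function giving a minimal speedup is
identically `1`. -/
theorem odometer_no_nontrivial_boundedSpeedup
    {X : Type*} [TopologicalSpace X] [CompactSpace X]
    [TopologicalSpace.MetrizableSpace X] [TotallyDisconnectedSpace X] [PerfectSpace X]
    [Nonempty X]
    (T : Equiv.Perm X) (hTc : Continuous T) (hTc' : Continuous T.symm)
    (hTmin : IsMinimalHomeo T)
    (m : ℕ → ℕ) (A : ℕ → Set X) (hodo : IsOdometerData T m A)
    (hprime : ∀ q : ℕ, q.Prime → ∀ N : ℕ, ∃ i, N ≤ i ∧ q ∣ m (i + 1) / m i)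
    (p : X → ℕ) (hp1 : ∀ x, 1 ≤ p x) (hpbdd : ∃ M : ℕ, ∀ x, p x ≤ M)
    (S : Equiv.Perm X) (hSc : Continuous S) (hSc' : Continuous S.symm)
    (hSp : ∀ x, S x = (T ^ p x) x) (hSmin : IsMinimalHomeo S) :
    ∀ x : X, p x = 1 := by
  obtain ⟨M, hM⟩ := hpbdd
  obtain ⟨k, g, rfl⟩ := hodo.exists_jump_eq_comp_address hTc' hSc hSp hM
  have : NeZero (m k) := ⟨(hodo.size_pos k).ne'⟩
  have hφ := hodo.isCyclicFactor_address hTc'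
  have hgcd : ∀ i, (∑ c, g c).gcd (m i) ≤ m k := fun i =>
    (hφ i).gcd_le_of_pow_eq hSmin (hodo.size_pos k) ((hφ k).speedup_pow_eq hSmin hSp)
  have hsum : ∑ c, g c = m k :=
    eq_of_dvd_of_gcd_le (hodo.size_pos k) hodo.size_pos
      (fun q hq => exists_mul_dvd_of_dvd_div_succ hodo.2.1 (hprime q hq) k)
      ((hφ k).dvd_sum_of_speedup hSmin hSp) hgcd
  have hg : ∀ c, 1 ≤ g c := (hφ k).surjective.forall.2 hp1
  exact fun x => eq_one_of_sum_eq_card hg (by rw [hsum, ZMod.card]) (hodo.address k x)
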